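/- Let H ⊆ ω^↑ω be an unbounded family (unbounded in ω^↑ω under ≤*) and let λ be an infinite regular cardinal with λ ≤ 𝔟. Then there is a downward-closed family F ⊆ ω^↑ω with a countable upper bound such that b(F) = min{λ, b(H)} and d(F) = d(H). -/

import Mathlib

open Filter Set

/-- The set of monotone (nondecreasing) functions ℕ → ℕ, i.e. ω^↑ω. -/
def MonoFam : Set (ℕ → ℕ) := {f | Monotone f}

/-- `f ≤* g` : `f n ≤ g n` for all but finitely many `n`. -/
def LeStar (f g : ℕ → ℕ) : Prop := ∀ᶠ n in atTop, f n ≤ g n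

/-- `f <* g` : `f n < g n` for all but finitely many `n`. -/
def LtStar (f g : ℕ → ℕ) : Prop := ∀ᶠ n in atTop, f n < g n

/-- `f ≺ g` : `lim (g n - f n) = +∞`. -/
def Prec (f g : ℕ → ℕ) : Prop := ∀ N : ℕ, ∀ᶠ n in atTop, f n + N ≤ g n

/-- `F` is closed downward under `≤*` within the monotone functions. -/
def DownwardClosed (F : Set (ℕ → ℕ)) : Prop :=
  ∀ f, Monotone f → ∀ g ∈ F, LeStar f g → f ∈ F

/-- `H` is unbounded in `F`. -/
def UnboundedIn (H F : Set (ℕ → ℕ)) : Prop :=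
  ∀ f ∈ F, ∃ h ∈ H, ¬ LtStar h f

/-- `H` dominates `F`. -/
def DominatesIn (H F : Set (ℕ → ℕ)) : Prop :=
  ∀ f ∈ F, ∃ h ∈ H, LeStar f h

/-- The bounding number `b(F)`. -/
noncomputable def bNum (F : Set (ℕ → ℕ)) : Cardinal :=
  sInf {c : Cardinal | ∃ H : Set (ℕ → ℕ), H ⊆ F ∧ UnboundedIn H F ∧ Cardinal.mk H = c}

/-- The dominating number `d(F)`. -/
noncomputable def dNum (F : Set (ℕ → ℕ)) : Cardinal :=
  sInf {c : Cardinal | ∃ H : Set (ℕ → ℕ), H ⊆ F ∧ DominatesIn H F ∧ Cardinal.mk H = c}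

/-- Membership in the S-class. -/
def SClass (F : Set (ℕ → ℕ)) : Prop :=
  ∃ h g : ℕ → ℕ, Monotone h ∧ Monotone g ∧
    (∀ f ∈ F, ∃ᶠ n in atTop, f n ≤ h n) ∧
    (∀ f, Monotone f → (∃ᶠ n in atTop, f n ≤ g n) → f ∈ F)

/-- A nonprincipal ultrafilter. -/
def NonPrincipal (U : Ultrafilter ℕ) : Prop := ∀ a : ℕ, U ≠ pure a

/-- Membership in the U-class for an ultrafilter `U`. -/
def UClass (U : Ultrafilter ℕ) (F : Set (ℕ → ℕ)) : Prop :=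
  ∃ h g : ℕ → ℕ, Monotone h ∧ Monotone g ∧
    (∀ f ∈ F, {n | f n ≤ h n} ∈ U) ∧
    (∀ f, Monotone f → {n | f n ≤ g n} ∈ U → f ∈ F)

/-- `χ(U)`, the least cardinality of a base generating the ultrafilter `U`. -/
noncomputable def ultraChi (U : Ultrafilter ℕ) : Cardinal :=
  sInf {c : Cardinal | ∃ B : Set (Set ℕ),
    (∀ b ∈ B, b ∈ U) ∧ (∀ A ∈ U, ∃ b ∈ B, b ⊆ A) ∧ Cardinal.mk B = c}

/-- The ultrafilter number `𝔲`. -/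
noncomputable def uNum : Cardinal :=
  sInf {c : Cardinal | ∃ U : Ultrafilter ℕ, NonPrincipal U ∧ ultraChi U = c}

/-- `A ⊆* B` : `A \ B` is finite. -/
def SubsetStar (A B : Set ℕ) : Prop := (A \ B).Finite

/-- A P-point. -/
def PPoint (V : Ultrafilter ℕ) : Prop :=
  NonPrincipal V ∧ ∀ C : Set (Set ℕ), C.Countable → (∀ A ∈ C, A ∈ V) →
    ∃ B ∈ V, ∀ A ∈ C, SubsetStar B A

/-- A `P_κ`-point. -/
def PKappaPoint (κ : Cardinal) (V : Ultrafilter ℕ) : Prop :=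
  NonPrincipal V ∧ ∀ C : Set (Set ℕ), Cardinal.mk C < κ → (∀ A ∈ C, A ∈ V) →
    ∃ B ∈ V, ∀ A ∈ C, SubsetStar B A

/-- `next(n, X)` : the least element of `X` which is `≥ n`. -/
noncomputable def nextIn (n : ℕ) (X : Set ℕ) : ℕ := sInf {x | x ∈ X ∧ n ≤ x}

/-- `F↓` : the monotone functions `g` with `f ≺ g` for all `f ∈ F`. -/
def FDown (F : Set (ℕ → ℕ)) : Set (ℕ → ℕ) := {g | Monotone g ∧ ∀ f ∈ F, Prec f g}

/-- `F` has a countable upper bound. -/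
def CountableUpperBound (F : Set (ℕ → ℕ)) : Prop :=
  ∃ G : Set (ℕ → ℕ), G.Countable ∧ G ⊆ FDown F ∧
    ¬ ∃ p, Monotone p ∧ (∀ f ∈ F, Prec f p) ∧ (∀ g ∈ G, Prec p g)

/-!
Subtract slow gaps from a cube. For monotone `h` let `h⁻¹` be the generalised inverse of
`k ↦ h k + k`; passing to inverses reverses `≤*`, and since inverses are coinitial among the
functions tending to infinity, no such function lies below all `h⁻¹` with `h` in an unbounded
family. Iterating this, `λ ≤ 𝔟` gives a `<*`-descending chain `r a` (`a < λ`) of slow functions.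

The gap of a pair `(a, h)` is `m ^ 2 + r a m` evaluated at `m = h⁻¹ n`: as `r a m ≤ m`, the order of
the gaps is lexicographic, so the square root of a gap recovers `h`, while `r a` provides the
strict inequality `<*`. At odd positions the gap is `n ^ 2 + r a n`, which recovers `a`. The
functions `(n + 1) ^ 3 - gap` then have bounding number `min λ b(H)` and, since `λ ≤ 𝔟 ≤ d(H)`,
dominating number `d(H)`. When `H` has a `<*`-maximal element, `b(H) = 1` and a chain of length one
is used instead.
-/

section StarOrders

variable {f g k : ℕ → ℕ}

lemma LeStar.trans (hfg : LeStar f g) (hgk : LeStar g k) : LeStar f k :=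
  EventuallyLE.trans hfg hgk

lemma LtStar.le (hfg : LtStar f g) : LeStar f g :=
  Eventually.mono hfg fun _ => Nat.le_of_lt

lemma LtStar.trans_le (hfg : LtStar f g) (hgk : LeStar g k) : LtStar f k := by
  filter_upwards [hfg, hgk] with n h₁ h₂ using h₁.trans_le h₂

lemma LeStar.trans_lt (hfg : LeStar f g) (hgk : LtStar g k) : LtStar f k := by
  filter_upwards [hfg, hgk] with n h₁ h₂ using h₁.trans_lt h₂

lemma LtStar.irrefl (f : ℕ → ℕ) : ¬ LtStar f f := fun hf =>
  let ⟨_, hn⟩ := Eventually.exists hf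
  hn.false

lemma LeStar.comp_tendsto (hfg : LeStar f g) (hk : Tendsto k atTop atTop) :
    LeStar (f ∘ k) (g ∘ k) :=
  hk.eventually hfg

lemma LtStar.comp_tendsto (hfg : LtStar f g) (hk : Tendsto k atTop atTop) :
    LtStar (f ∘ k) (g ∘ k) :=
  hk.eventually hfg

end StarOrders

section CardinalInvariants

variable {F G A : Set (ℕ → ℕ)}

lemma bNum_le_mk (hA : A ⊆ F) (hunb : UnboundedIn A F) : bNum F ≤ Cardinal.mk A :=
  csInf_le' ⟨A, hA, hunb, rfl⟩

lemma dNum_le_mk (hA : A ⊆ F) (hdom : DominatesIn A F) : dNum F ≤ Cardinal.mk A :=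
  csInf_le' ⟨A, hA, hdom, rfl⟩

lemma exists_mk_eq_bNum (F : Set (ℕ → ℕ)) :
    ∃ A ⊆ F, UnboundedIn A F ∧ Cardinal.mk A = bNum F :=
  csInf_mem (s := {c | ∃ A ⊆ F, UnboundedIn A F ∧ Cardinal.mk A = c})
    ⟨_, F, subset_rfl, fun f hf => ⟨f, hf, LtStar.irrefl f⟩, rfl⟩

lemma exists_mk_eq_dNum (F : Set (ℕ → ℕ)) :
    ∃ A ⊆ F, DominatesIn A F ∧ Cardinal.mk A = dNum F :=
  csInf_mem (s := {c | ∃ A ⊆ F, DominatesIn A F ∧ Cardinal.mk A = c})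
    ⟨_, F, subset_rfl, fun f hf => ⟨f, hf, Eventually.of_forall fun _ => le_rfl⟩, rfl⟩

lemma exists_forall_ltStar_of_mk_lt_bNum (hA : A ⊆ F) (hcard : Cardinal.mk A < bNum F) :
    ∃ f ∈ F, ∀ a ∈ A, LtStar a f := by
  by_contra! hunb
  exact (bNum_le_mk hA hunb).not_gt hcard

lemma one_le_bNum (hF : F.Nonempty) : 1 ≤ bNum F := by
  obtain ⟨A, -, hunb, hcard⟩ := exists_mk_eq_bNum F
  obtain ⟨f, hf⟩ := hF
  obtain ⟨a, ha, -⟩ := hunb f hf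
  rw [← hcard, Cardinal.one_le_iff_ne_zero, Cardinal.mk_ne_zero_iff]
  exact ⟨a, ha⟩

lemma bNum_eq_one_of_forall_not_ltStar {h : ℕ → ℕ} (hh : h ∈ F)
    (hmax : ∀ f ∈ F, ¬ LtStar h f) : bNum F = 1 := by
  refine le_antisymm ?_ (one_le_bNum ⟨h, hh⟩)
  calc bNum F ≤ Cardinal.mk ({h} : Set (ℕ → ℕ)) :=
        bNum_le_mk (singleton_subset_iff.2 hh) fun f hf => ⟨h, rfl, hmax f hf⟩
    _ = 1 := Cardinal.mk_singleton h

lemma bNum_le_dNum_of_unboundedIn (hGF : G ⊆ F) (hunb : UnboundedIn G F) :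
    bNum F ≤ dNum G := by
  obtain ⟨D, hDG, hdom, hcard⟩ := exists_mk_eq_dNum G
  rw [← hcard]
  refine bNum_le_mk (hDG.trans hGF) fun f hf => ?_
  obtain ⟨g, hg, hgf⟩ := hunb f hf
  obtain ⟨d, hd, hgd⟩ := hdom g hg
  exact ⟨d, hd, fun hdf => hgf (hgd.trans_lt hdf)⟩

-- In this lemma and the next, `α` and the choice of `f'` form a Galois–Tukey connection.
lemma bNum_le_bNum_of_mapsTo {α : (ℕ → ℕ) → ℕ → ℕ} (hα : MapsTo α F G)
    (hαG : ∀ g ∈ G, ∃ f' ∈ F, ∀ f ∈ F, LtStar (α f) g → LtStar f f') : bNum G ≤ bNum F := by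
  obtain ⟨B, hBF, hunb, hcard⟩ := exists_mk_eq_bNum F
  rw [← hcard]
  refine (bNum_le_mk (hα.mono_left hBF).image_subset fun g hg => ?_).trans Cardinal.mk_image_le
  obtain ⟨f', hf', hlt⟩ := hαG g hg
  obtain ⟨f, hf, hff'⟩ := hunb f' hf'
  exact ⟨α f, mem_image_of_mem α hf, fun hfg => hff' (hlt f (hBF hf) hfg)⟩

lemma dNum_le_dNum_of_mapsTo {α : (ℕ → ℕ) → ℕ → ℕ} (hα : MapsTo α F G)
    (hαG : ∀ g ∈ G, ∃ f' ∈ F, ∀ f ∈ F, LeStar (α f) g → LeStar f f') : dNum F ≤ dNum G := by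
  obtain ⟨D, hDG, hdom, hcard⟩ := exists_mk_eq_dNum G
  choose! β hβF hβ using hαG
  rw [← hcard]
  refine (dNum_le_mk (A := β '' D) ?_ fun f hf => ?_).trans Cardinal.mk_image_le
  · rintro _ ⟨g, hg, rfl⟩
    exact hβF g (hDG hg)
  · obtain ⟨g, hg, hfg⟩ := hdom (α f) (hα hf)
    exact ⟨β g, mem_image_of_mem β hg, hβ g (hDG hg) f hf hfg⟩

lemma DominatesIn.bNum_eq (hGF : G ⊆ F) (hdom : DominatesIn G F) : bNum F = bNum G := by
  apply le_antisymm
  · refine bNum_le_bNum_of_mapsTo (α := id) hGF fun f hf => ?_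
    obtain ⟨g, hg, hfg⟩ := hdom f hf
    exact ⟨g, hg, fun _ _ hlt => hlt.trans_le hfg⟩
  · choose! α hαG hα using hdom
    exact bNum_le_bNum_of_mapsTo hαG fun g hg => ⟨g, hGF hg, fun f hf => (hα f hf).trans_lt⟩

lemma DominatesIn.dNum_eq (hGF : G ⊆ F) (hdom : DominatesIn G F) : dNum F = dNum G := by
  apply le_antisymm
  · choose! α hαG hα using hdom
    exact dNum_le_dNum_of_mapsTo hαG fun g hg => ⟨g, hGF hg, fun f hf => (hα f hf).trans⟩
  · refine dNum_le_dNum_of_mapsTo (α := id) hGF fun f hf => ?_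
    obtain ⟨g, hg, hfg⟩ := hdom f hf
    exact ⟨g, hg, fun _ _ hle => hle.trans hfg⟩

/-- The monotone functions lying `≤*`-below a member of `Φ`: for monotone `Φ`, the least
downward closed family containing `Φ`. -/
def downwardClosure (Φ : Set (ℕ → ℕ)) : Set (ℕ → ℕ) :=
  {f | Monotone f ∧ ∃ φ ∈ Φ, LeStar f φ}

variable {Φ : Set (ℕ → ℕ)}

lemma downwardClosed_downwardClosure (Φ : Set (ℕ → ℕ)) : DownwardClosed (downwardClosure Φ) := by
  rintro f hf g ⟨-, φ, hφ, hgφ⟩ hfg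
  exact ⟨hf, φ, hφ, hfg.trans hgφ⟩

lemma subset_downwardClosure (hΦ : Φ ⊆ MonoFam) : Φ ⊆ downwardClosure Φ :=
  fun φ hφ => ⟨hΦ hφ, φ, hφ, Eventually.of_forall fun _ => le_rfl⟩

lemma bNum_downwardClosure (hΦ : Φ ⊆ MonoFam) : bNum (downwardClosure Φ) = bNum Φ :=
  DominatesIn.bNum_eq (subset_downwardClosure hΦ) fun _ hf => hf.2

lemma dNum_downwardClosure (hΦ : Φ ⊆ MonoFam) : dNum (downwardClosure Φ) = dNum Φ :=
  DominatesIn.dNum_eq (subset_downwardClosure hΦ) fun _ hf => hf.2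

end CardinalInvariants

section LowerInverse

/-- The generalised inverse of `k ↦ h k + k`, i.e. its lower adjoint when `h` is monotone. The
summand `k` keeps the set nonempty for every `h`, and makes the inverse at most the identity. -/
noncomputable def lowerInverse (h : ℕ → ℕ) (n : ℕ) : ℕ := sInf {k | n ≤ h k + k}

lemma lowerInverse_le_self (h : ℕ → ℕ) (n : ℕ) : lowerInverse h n ≤ n :=
  Nat.sInf_le (Nat.le_add_left n (h n))

variable {h h' : ℕ → ℕ}

lemma gc_lowerInverse (hm : Monotone h) :
    GaloisConnection (lowerInverse h) (fun k => h k + k) := by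
  refine fun n k => ⟨fun hk => ?_, fun hk => Nat.sInf_le hk⟩
  have hmem : n ≤ h (lowerInverse h n) + lowerInverse h n :=
    Nat.sInf_mem (s := {k | n ≤ h k + k}) ⟨n, Nat.le_add_left n (h n)⟩
  exact hmem.trans (add_le_add (hm hk) hk)

lemma tendsto_lowerInverse (hm : Monotone h) : Tendsto (lowerInverse h) atTop atTop := by
  refine tendsto_atTop_atTop_of_monotone (gc_lowerInverse hm).monotone_l fun M =>
    ⟨h M + M + 1, ?_⟩
  by_contra! hlt
  have := gc_lowerInverse hm |>.le_iff_le.1 hlt.le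
  omega

lemma lowerInverse_leStar_lowerInverse_iff (hm : Monotone h) (hm' : Monotone h') :
    LeStar (lowerInverse h') (lowerInverse h) ↔ LeStar h h' := by
  constructor <;> intro hle
  · have htends : Tendsto (fun k => h k + k) atTop atTop :=
      tendsto_atTop_mono (fun k => Nat.le_add_left k (h k)) tendsto_id
    filter_upwards [htends.eventually hle] with k hk
    have : h k + k ≤ h' k + k :=
      (gc_lowerInverse hm').le_iff_le.1 (hk.trans ((gc_lowerInverse hm).l_u_le k))
    omega
  · filter_upwards [(tendsto_lowerInverse hm).eventually hle] with n hn
    exact (gc_lowerInverse hm').l_le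
      (((gc_lowerInverse hm).le_u_l n).trans (Nat.add_le_add_right hn _))

lemma exists_lowerInverse_ltStar {p : ℕ → ℕ} (hp : Tendsto p atTop atTop) :
    ∃ t, Monotone t ∧ LtStar (lowerInverse t) p := by
  obtain ⟨t, htm, ht⟩ := extraction_forall_of_eventually fun m =>
    eventually_forall_ge_atTop.2 (hp.eventually_gt_atTop (m + 1))
  refine ⟨t, htm.monotone, ?_⟩
  filter_upwards [(tendsto_lowerInverse htm.monotone).eventually_gt_atTop 0] with n hpos
  obtain ⟨m, hm⟩ := Nat.exists_eq_add_one.2 hpos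
  have hlt : t m + m < n := by
    by_contra! hle
    have := (gc_lowerInverse htm.monotone).l_le hle
    omega
  rw [hm]
  exact ht m n (by omega)

lemma exists_not_leStar_lowerInverse {H : Set (ℕ → ℕ)} (hH : H ⊆ MonoFam)
    (hunb : UnboundedIn H MonoFam) {p : ℕ → ℕ} (hp : Tendsto p atTop atTop) :
    ∃ h ∈ H, ¬ LeStar p (lowerInverse h) := by
  obtain ⟨t, htm, ht⟩ := exists_lowerInverse_ltStar hp
  obtain ⟨h, hh, hht⟩ := hunb (fun n => t n + 1) (htm.add_const 1)
  refine ⟨h, hh, fun hle => hht ?_⟩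
  filter_upwards [(lowerInverse_leStar_lowerInverse_iff (hH hh) htm).1 (ht.trans_le hle).le]
    with n hn using Nat.lt_succ_of_le hn

lemma exists_slow_ltStar_of_mk_lt_bNum {S : Set (ℕ → ℕ)} (hS : ∀ s ∈ S, Tendsto s atTop atTop)
    (hcard : Cardinal.mk S < bNum MonoFam) :
    ∃ r : ℕ → ℕ, ((∀ n, r n ≤ n) ∧ Tendsto r atTop atTop) ∧ ∀ s ∈ S, LtStar r s := by
  choose! T hTm hT using fun s hs => exists_lowerInverse_ltStar (hS s hs)
  obtain ⟨t, htm, ht⟩ := exists_forall_ltStar_of_mk_lt_bNum (A := T '' S) (F := MonoFam)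
    (image_subset_iff.2 hTm) (Cardinal.mk_image_le.trans_lt hcard)
  refine ⟨lowerInverse t, ⟨lowerInverse_le_self t, tendsto_lowerInverse htm⟩, fun s hs => ?_⟩
  have hTt : LeStar (T s) t := (ht _ (mem_image_of_mem T hs)).le
  exact ((lowerInverse_leStar_lowerInverse_iff (hTm s hs) htm).2 hTt).trans_lt (hT s hs)

end LowerInverse

section SlowChain

open Cardinal in
lemma exists_chain_of_forall_mk_lt.{u} {α : Type u} {R : α → α → Prop} (κ : Cardinal.{u})
    (hR : ∀ S : Set α, #S < κ → ∃ x, ∀ s ∈ S, R s x) :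
    ∃ r : κ.ord.ToType → α, ∀ a b, a < b → R (r a) (r b) := by
  choose next hnext using hR
  have hcard (b : κ.ord.ToType) (ih : Iio b → α) : #(range ih) < κ :=
    mk_range_le.trans_lt ((mk_Iio_lt b (by simp)).trans_eq (mk_ord_toType κ))
  let r : κ.ord.ToType → α := (wellFounded_lt (α := κ.ord.ToType)).fix fun b ih =>
    next (range fun c : Iio b => ih c c.2) (hcard b _)
  have hr (b) : r b = next (range fun c : Iio b => r c) (hcard b _) := WellFounded.fix_eq _ _ b
  refine ⟨r, fun a b hab => ?_⟩
  rw [hr b]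
  exact hnext _ _ (r a) ⟨⟨a, hab⟩, rfl⟩

/-- A `<*`-descending sequence of functions bounded by the identity, indexed by a linear order. -/
structure IsSlowChain {J : Type} [LinearOrder J] (r : J → ℕ → ℕ) : Prop where
  le_self : ∀ a n, r a n ≤ n
  ltStar : ∀ a b, a < b → LtStar (r b) (r a)

lemma exists_isSlowChain {κ : Cardinal} (hκ : κ ≤ bNum MonoFam) :
    ∃ r : κ.ord.ToType → ℕ → ℕ, IsSlowChain r := by
  obtain ⟨r, hr⟩ := exists_chain_of_forall_mk_lt
    (α := {s : ℕ → ℕ // (∀ n, s n ≤ n) ∧ Tendsto s atTop atTop})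
    (R := fun s t => LtStar t.1 s.1) κ fun S hS => by
      obtain ⟨x, hx, hlt⟩ := exists_slow_ltStar_of_mk_lt_bNum (S := Subtype.val '' S)
        (by rintro _ ⟨s, -, rfl⟩; exact s.2.2) ((Cardinal.mk_image_le.trans_lt hS).trans_le hκ)
      exact ⟨⟨x, hx⟩, fun s hs => hlt s (mem_image_of_mem _ hs)⟩
  exact ⟨fun a => r a, fun a => (r a).2.1, hr⟩

lemma IsSlowChain.not_ltStar {J : Type} [LinearOrder J] {r : J → ℕ → ℕ} (hr : IsSlowChain r)
    {a b : J} (hab : a ≤ b) : ¬ LtStar (r a) (r b) := fun hlt => by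
  obtain rfl | hab := hab.eq_or_lt
  · exact LtStar.irrefl _ hlt
  · exact LtStar.irrefl _ (hlt.trans_le (hr.ltStar a b hab).le)

end SlowChain

section Gap

/-- The lower inverse of `h` interleaved with the identity, so that the even positions of a gap
recover `h` and the odd ones recover the chain element. -/
noncomputable def delay (h : ℕ → ℕ) (n : ℕ) : ℕ :=
  if Even n then lowerInverse h (n / 2) else n / 2

/-- Codes the pair `(m, r m)` lexicographically, provided `r m ≤ m`. -/
def squareCode (r : ℕ → ℕ) (m : ℕ) : ℕ := m ^ 2 + r m

/-- The amount by which the function coding `(r, h)` stays below the cube `(n + 1) ^ 3`. -/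
noncomputable def gap (r h : ℕ → ℕ) : ℕ → ℕ := squareCode r ∘ delay h

variable {r r' h h' : ℕ → ℕ}

lemma tendsto_half : Tendsto (fun n : ℕ => n / 2) atTop atTop :=
  Nat.tendsto_div_const_atTop two_ne_zero

lemma tendsto_two_mul : Tendsto (fun n : ℕ => 2 * n) atTop atTop :=
  tendsto_id.const_mul_atTop' two_pos

lemma tendsto_two_mul_add_one : Tendsto (fun n : ℕ => 2 * n + 1) atTop atTop :=
  tendsto_atTop_mono (fun n => Nat.le_succ (2 * n)) tendsto_two_mul

lemma delay_two_mul (h : ℕ → ℕ) (n : ℕ) : delay h (2 * n) = lowerInverse h n := by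
  simp [delay]

lemma delay_two_mul_add_one (h : ℕ → ℕ) (n : ℕ) : delay h (2 * n + 1) = n := by
  simp only [delay, Nat.not_even_two_mul_add_one, if_false]
  omega

lemma delay_le_self (h : ℕ → ℕ) (n : ℕ) : delay h n ≤ n := by
  unfold delay
  split_ifs
  · exact (lowerInverse_le_self h _).trans (Nat.div_le_self n 2)
  · exact Nat.div_le_self n 2

lemma tendsto_delay (hm : Monotone h) : Tendsto (delay h) atTop atTop :=
  (((tendsto_lowerInverse hm).comp tendsto_half).mono_left inf_le_left).if
    (tendsto_half.mono_left inf_le_left)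

lemma delay_leStar_delay_iff (hm : Monotone h) (hm' : Monotone h') :
    LeStar (delay h') (delay h) ↔ LeStar h h' := by
  rw [← lowerInverse_leStar_lowerInverse_iff hm hm']
  constructor <;> intro hle
  · filter_upwards [hle.comp_tendsto tendsto_two_mul] with n hn
    simpa only [Function.comp_apply, delay_two_mul] using hn
  · filter_upwards [hle.comp_tendsto tendsto_half] with n hn
    unfold delay
    split_ifs
    exacts [hn, le_rfl]

lemma sqrt_squareCode (hr : ∀ n, r n ≤ n) (m : ℕ) : Nat.sqrt (squareCode r m) = m :=
  Nat.sqrt_add_eq' m ((hr m).trans (Nat.le_add_left m m))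

lemma strictMono_squareCode (hr : ∀ n, r n ≤ n) : StrictMono (squareCode r) :=
  strictMono_nat_of_lt_succ fun m => by
    have := hr m
    unfold squareCode
    nlinarith

lemma gap_leStar_gap (hr : ∀ n, r n ≤ n) (hm : Monotone h) (hm' : Monotone h')
    (hle : LeStar h h') : LeStar (gap r h') (gap r h) :=
  Eventually.mono ((delay_leStar_delay_iff hm hm').2 hle) fun _ hn =>
    (strictMono_squareCode hr).monotone hn

lemma gap_ltStar_gap (hr' : ∀ n, r' n ≤ n) (hm : Monotone h) (hm' : Monotone h')
    (hlt : LtStar r' r) (hle : LeStar h h') : LtStar (gap r' h') (gap r h) := by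
  refine (gap_leStar_gap hr' hm hm' hle).trans_lt ?_
  filter_upwards [hlt.comp_tendsto (tendsto_delay hm)] with n hn using Nat.add_lt_add_left hn _

lemma leStar_of_gap_leStar_gap (hr : ∀ n, r n ≤ n) (hr' : ∀ n, r' n ≤ n) (hm : Monotone h)
    (hm' : Monotone h') (hle : LeStar (gap r' h') (gap r h)) : LeStar h h' := by
  rw [← delay_leStar_delay_iff hm hm']
  filter_upwards [hle] with n hn
  simpa only [gap, Function.comp_apply, sqrt_squareCode hr, sqrt_squareCode hr']
    using Nat.sqrt_le_sqrt hn

lemma ltStar_of_gap_ltStar_gap (hlt : LtStar (gap r' h') (gap r h)) : LtStar r' r := by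
  filter_upwards [hlt.comp_tendsto tendsto_two_mul_add_one] with n hn
  simpa only [gap, Function.comp_apply, delay_two_mul_add_one, squareCode, add_lt_add_iff_left]
    using hn

lemma gap_le_sq (hr : ∀ n, r n ≤ n) (h : ℕ → ℕ) (n : ℕ) : gap r h n ≤ (n + 1) ^ 2 :=
  calc gap r h n ≤ squareCode r n := (strictMono_squareCode hr).monotone (delay_le_self h n)
    _ ≤ n ^ 2 + n := Nat.add_le_add_left (hr n) _
    _ ≤ (n + 1) ^ 2 := by nlinarith

lemma gap_le_cube (hr : ∀ n, r n ≤ n) (h : ℕ → ℕ) (n : ℕ) : gap r h n ≤ (n + 1) ^ 3 :=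
  (gap_le_sq hr h n).trans (Nat.pow_le_pow_right n.succ_pos (by norm_num))

lemma tendsto_gap (hr : ∀ n, r n ≤ n) (hm : Monotone h) : Tendsto (gap r h) atTop atTop :=
  (strictMono_squareCode hr).tendsto_atTop.comp (tendsto_delay hm)

lemma exists_not_leStar_gap {H : Set (ℕ → ℕ)} (hH : H ⊆ MonoFam) (hunb : UnboundedIn H MonoFam)
    (hr : ∀ n, r n ≤ n) {p : ℕ → ℕ} (hp : Tendsto p atTop atTop) :
    ∃ h ∈ H, ¬ LeStar p (gap r h) := by
  have hsqrt : Tendsto Nat.sqrt atTop atTop :=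
    tendsto_atTop_atTop_of_monotone (fun _ _ => Nat.sqrt_le_sqrt) fun m => ⟨m * m, m.sqrt_eq.ge⟩
  obtain ⟨h, hh, hnot⟩ := exists_not_leStar_lowerInverse hH hunb
    (hsqrt.comp (hp.comp tendsto_two_mul))
  refine ⟨h, hh, fun hle => hnot ?_⟩
  filter_upwards [hle.comp_tendsto tendsto_two_mul] with n hn
  simpa only [gap, Function.comp_apply, sqrt_squareCode hr, delay_two_mul]
    using Nat.sqrt_le_sqrt hn

end Gap

section BelowCube

/-- The function coding the pair `(r, h)`. The subtraction never truncates when `r n ≤ n`. -/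
noncomputable def belowCube (r h : ℕ → ℕ) (n : ℕ) : ℕ := (n + 1) ^ 3 - gap r h n

variable {r r' h h' : ℕ → ℕ}

lemma monotone_belowCube (hr : ∀ n, r n ≤ n) (h : ℕ → ℕ) : Monotone (belowCube r h) := by
  refine monotone_nat_of_le_succ fun n => ?_
  have hgap : gap r h (n + 1) ≤ (n + 1 + 1) ^ 2 := gap_le_sq hr h (n + 1)
  have hcube : (n + 1) ^ 3 + (n + 1 + 1) ^ 2 ≤ (n + 1 + 1) ^ 3 := by ring_nf; omega
  unfold belowCube
  omega

lemma belowCube_leStar_belowCube_iff (hr' : ∀ n, r' n ≤ n) :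
    LeStar (belowCube r h) (belowCube r' h') ↔ LeStar (gap r' h') (gap r h) :=
  eventually_congr <| Eventually.of_forall fun n =>
    tsub_le_tsub_iff_left (gap_le_cube hr' h' n)

lemma belowCube_ltStar_belowCube_iff (hr : ∀ n, r n ≤ n) :
    LtStar (belowCube r h) (belowCube r' h') ↔ LtStar (gap r' h') (gap r h) :=
  eventually_congr <| Eventually.of_forall fun n =>
    tsub_lt_tsub_iff_left_of_le (gap_le_cube hr h n)

lemma leStar_of_belowCube_leStar_belowCube (hr : ∀ n, r n ≤ n) (hr' : ∀ n, r' n ≤ n)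
    (hm : Monotone h) (hm' : Monotone h')
    (hle : LeStar (belowCube r h) (belowCube r' h')) : LeStar h h' :=
  leStar_of_gap_leStar_gap hr hr' hm hm' ((belowCube_leStar_belowCube_iff hr').1 hle)

lemma prec_cube_of_leStar_belowCube {f : ℕ → ℕ} (hr : ∀ n, r n ≤ n) (hm : Monotone h)
    (hf : LeStar f (belowCube r h)) : Prec f (fun n => (n + 1) ^ 3) := by
  intro N
  filter_upwards [hf, (tendsto_gap hr hm).eventually_ge_atTop N] with n hn hN
  have := gap_le_cube hr h n
  unfold belowCube at hn
  omega

end BelowCube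

section BelowCubeFamily

variable {J : Type} [LinearOrder J] {r : J → ℕ → ℕ} {H : Set (ℕ → ℕ)}

/-- The functions coding the pairs `(r a, h)` with `h ∈ H`. -/
def belowCubeFamily (r : J → ℕ → ℕ) (H : Set (ℕ → ℕ)) : Set (ℕ → ℕ) :=
  image2 (fun a h => belowCube (r a) h) univ H

lemma belowCubeFamily_subset_monoFam (hr : IsSlowChain r) : belowCubeFamily r H ⊆ MonoFam := by
  rintro _ ⟨a, -, h, -, rfl⟩
  exact monotone_belowCube (hr.le_self a) h

lemma countableUpperBound_downwardClosure_belowCubeFamily [Nonempty J] (hr : IsSlowChain r)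
    (hH : H ⊆ MonoFam) (hunb : UnboundedIn H MonoFam) :
    CountableUpperBound (downwardClosure (belowCubeFamily r H)) := by
  refine ⟨{fun n => (n + 1) ^ 3}, countable_singleton _, singleton_subset_iff.2 ⟨?_, ?_⟩, ?_⟩
  · exact fun m n hmn => Nat.pow_le_pow_left (Nat.succ_le_succ hmn) 3
  · rintro f ⟨-, _, ⟨a, -, h, hh, rfl⟩, hf⟩
    exact prec_cube_of_leStar_belowCube (hr.le_self a) (hH hh) hf
  · rintro ⟨p, -, hFp, hp⟩
    have hpcube : Prec p (fun n => (n + 1) ^ 3) := hp _ rfl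
    have hgap : Tendsto (fun n => (n + 1) ^ 3 - p n) atTop atTop :=
      tendsto_atTop.2 fun N => (hpcube N).mono fun _ => Nat.le_sub_of_add_le'
    let a : J := Classical.arbitrary J
    obtain ⟨h, hh, hnot⟩ := exists_not_leStar_gap hH hunb (hr.le_self a) hgap
    have hmem := subset_downwardClosure (belowCubeFamily_subset_monoFam hr)
      (mem_image2_of_mem (mem_univ a) hh)
    refine hnot ?_
    filter_upwards [hFp _ hmem 0] with n hn
    unfold belowCube at hn
    omega

lemma bNum_belowCubeFamily_le_cof (hr : IsSlowChain r) (hne : H.Nonempty) :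
    bNum (belowCubeFamily r H) ≤ Order.cof J := by
  obtain ⟨S, hS, hcard⟩ := Order.exists_cof_eq J
  obtain ⟨h, hh⟩ := hne
  rw [← hcard]
  refine (bNum_le_mk (A := (fun a => belowCube (r a) h) '' S) ?_ ?_).trans Cardinal.mk_image_le
  · rintro _ ⟨a, -, rfl⟩
    exact mem_image2_of_mem (mem_univ a) hh
  · rintro _ ⟨b, -, h', -, rfl⟩
    obtain ⟨a, ha, hba⟩ := hS b
    refine ⟨_, mem_image_of_mem _ ha, fun hlt => hr.not_ltStar hba ?_⟩
    exact ltStar_of_gap_ltStar_gap ((belowCube_ltStar_belowCube_iff (hr.le_self a)).1 hlt)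

lemma bNum_belowCubeFamily_le_bNum [Nonempty J] (hr : IsSlowChain r) (hH : H ⊆ MonoFam)
    (hsucc : ∀ h ∈ H, ∃ h' ∈ H, LtStar h h') : bNum (belowCubeFamily r H) ≤ bNum H := by
  let a : J := Classical.arbitrary J
  refine bNum_le_bNum_of_mapsTo (α := belowCube (r a))
    (fun h hh => mem_image2_of_mem (mem_univ a) hh) ?_
  rintro _ ⟨b, -, k, hk, rfl⟩
  obtain ⟨k', hk', hkk'⟩ := hsucc k hk
  refine ⟨k', hk', fun h hh hlt => LeStar.trans_lt ?_ hkk'⟩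
  exact leStar_of_belowCube_leStar_belowCube (hr.le_self a) (hr.le_self b) (hH hh) (hH hk) hlt.le

lemma min_cof_bNum_le_bNum_belowCubeFamily [Nonempty J] (hr : IsSlowChain r) (hH : H ⊆ MonoFam) :
    min (Order.cof J) (bNum H) ≤ bNum (belowCubeFamily r H) := by
  obtain ⟨B, hB, hunb, hcard⟩ := exists_mk_eq_bNum (belowCubeFamily r H)
  rw [← hcard]
  by_contra! hsmall
  obtain ⟨hcof, hbH⟩ := lt_min_iff.1 hsmall
  choose! a _ k hkH hak using hB
  have hcof' : ¬ IsCofinal (a '' B) := fun h =>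
    (Order.cof_le h).not_gt (Cardinal.mk_image_le.trans_lt hcof)
  obtain ⟨b, hb⟩ := not_isCofinal_iff.1 hcof'
  obtain ⟨h, hh, hkh⟩ := exists_forall_ltStar_of_mk_lt_bNum (A := k '' B)
    (image_subset_iff.2 hkH) (Cardinal.mk_image_le.trans_lt hbH)
  obtain ⟨f, hf, hnot⟩ := hunb (belowCube (r b) h) (mem_image2_of_mem (mem_univ b) hh)
  refine hnot ?_
  rw [← hak hf, belowCube_ltStar_belowCube_iff (hr.le_self _)]
  exact gap_ltStar_gap (hr.le_self b) (hH (hkH hf)) (hH hh)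
    (hr.ltStar _ _ (hb _ (mem_image_of_mem a hf))) (hkh _ (mem_image_of_mem k hf)).le

lemma bNum_belowCubeFamily [Nonempty J] (hr : IsSlowChain r) (hH : H ⊆ MonoFam) (hne : H.Nonempty)
    (hsucc : Order.cof J = 1 ∨ ∀ h ∈ H, ∃ h' ∈ H, LtStar h h') :
    bNum (belowCubeFamily r H) = min (Order.cof J) (bNum H) := by
  have hcof := bNum_belowCubeFamily_le_cof hr hne
  refine le_antisymm (le_min hcof ?_) (min_cof_bNum_le_bNum_belowCubeFamily hr hH)
  obtain hone | hsucc := hsucc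
  · exact (hone ▸ hcof).trans (one_le_bNum hne)
  · exact bNum_belowCubeFamily_le_bNum hr hH hsucc

lemma dNum_le_dNum_belowCubeFamily [Nonempty J] (hr : IsSlowChain r) (hH : H ⊆ MonoFam) :
    dNum H ≤ dNum (belowCubeFamily r H) := by
  let a : J := Classical.arbitrary J
  refine dNum_le_dNum_of_mapsTo (α := belowCube (r a))
    (fun h hh => mem_image2_of_mem (mem_univ a) hh) ?_
  rintro _ ⟨b, -, k, hk, rfl⟩
  refine ⟨k, hk, fun h hh hle => ?_⟩
  exact leStar_of_belowCube_leStar_belowCube (hr.le_self a) (hr.le_self b) (hH hh) (hH hk) hle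

lemma dNum_belowCubeFamily_le_mul (hr : IsSlowChain r) (hH : H ⊆ MonoFam) :
    dNum (belowCubeFamily r H) ≤ Cardinal.mk J * dNum H := by
  obtain ⟨D, hDH, hdom, hcard⟩ := exists_mk_eq_dNum H
  calc dNum (belowCubeFamily r H)
      ≤ Cardinal.mk (image2 (fun a h => belowCube (r a) h) univ D) := by
        refine dNum_le_mk (image2_subset_left hDH) ?_
        rintro _ ⟨a, -, h, hh, rfl⟩
        obtain ⟨d, hd, hhd⟩ := hdom h hh
        refine ⟨_, mem_image2_of_mem (mem_univ a) hd, ?_⟩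
        rw [belowCube_leStar_belowCube_iff (hr.le_self a)]
        exact gap_leStar_gap (hr.le_self a) (hH hh) (hH (hDH hd)) hhd
    _ ≤ Cardinal.mk (univ : Set J) * Cardinal.mk D := Cardinal.mk_image2_le
    _ = Cardinal.mk J * dNum H := by rw [Cardinal.mk_univ, hcard]

lemma dNum_belowCubeFamily [Nonempty J] (hr : IsSlowChain r) (hH : H ⊆ MonoFam)
    (hinf : Cardinal.aleph0 ≤ dNum H) (hJ : Cardinal.mk J ≤ dNum H) :
    dNum (belowCubeFamily r H) = dNum H :=
  le_antisymm ((dNum_belowCubeFamily_le_mul hr hH).trans (Cardinal.mul_le_of_le hinf hJ le_rfl))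
    (dNum_le_dNum_belowCubeFamily hr hH)

end BelowCubeFamily

lemma exists_chain_length {lam : Cardinal} (hreg : lam.IsRegular) (H : Set (ℕ → ℕ)) :
    ∃ κ ≤ lam, Nonempty κ.ord.ToType ∧ Order.cof κ.ord.ToType = κ ∧
      min κ (bNum H) = min lam (bNum H) ∧ (κ = 1 ∨ ∀ h ∈ H, ∃ h' ∈ H, LtStar h h') := by
  have hone : 1 ≤ lam := Cardinal.one_le_aleph0.trans hreg.aleph0_le
  by_cases hsucc : ∀ h ∈ H, ∃ h' ∈ H, LtStar h h'
  · exact ⟨lam, le_rfl, by simpa using hreg.ne_zero, by simpa using hreg.cof_ord, rfl, .inr hsucc⟩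
  · push Not at hsucc
    obtain ⟨h, hh, hmax⟩ := hsucc
    refine ⟨1, hone, by simp, by simp, ?_, .inl rfl⟩
    rw [bNum_eq_one_of_forall_not_ltStar hh hmax, min_self, min_eq_right hone]

/-- From an unbounded family `H` and a regular `λ ≤ 𝔟`, one gets
a downward-closed family `F` with countable upper bound, `b(F) = min{λ, b(H)}`
and `d(F) = d(H)`. -/
theorem bounded_family_from_unbounded (H : Set (ℕ → ℕ)) (hH : H ⊆ MonoFam)
    (hunb : UnboundedIn H MonoFam)
    (lam : Cardinal) (hreg : lam.IsRegular) (hlam : lam ≤ bNum MonoFam) :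
    ∃ F : Set (ℕ → ℕ), F ⊆ MonoFam ∧ DownwardClosed F ∧ CountableUpperBound F ∧
      bNum F = min lam (bNum H) ∧ dNum F = dNum H := by
  have hne : H.Nonempty :=
    let ⟨h, hh, _⟩ := hunb (fun _ => 0) monotone_const
    ⟨h, hh⟩
  have hlamd : lam ≤ dNum H := hlam.trans (bNum_le_dNum_of_unboundedIn hH hunb)
  obtain ⟨κ, hκlam, _, hcof, hmin, hsucc⟩ := exists_chain_length hreg H
  obtain ⟨r, hr⟩ := exists_isSlowChain (hκlam.trans hlam)
  have hΦ := belowCubeFamily_subset_monoFam (H := H) hr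
  refine ⟨downwardClosure (belowCubeFamily r H), fun f hf => hf.1,
    downwardClosed_downwardClosure _,
    countableUpperBound_downwardClosure_belowCubeFamily hr hH hunb, ?_, ?_⟩
  · rw [bNum_downwardClosure hΦ, bNum_belowCubeFamily hr hH hne (by rwa [hcof]), hcof, hmin]
  · rw [dNum_downwardClosure hΦ, dNum_belowCubeFamily hr hH (hreg.aleph0_le.trans hlamd)
      (by simpa using hκlam.trans hlamd)]
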